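/- For every δ with 0 < δ < e^{-3/2}, the function F₁ satisfies the Δ₂-condition with constant 4: F₁(2t) ≤ 4·F₁(t) for every t ∈ ℝ. -/

import Mathlib

noncomputable def F1 (δ s : ℝ) : ℝ :=
  if |s| < δ then -(1/2) * s^2 * Real.log (s^2)
  else -(1/2) * s^2 * (Real.log (δ^2) + 3) + 2*δ*|s| - (1/2)*δ^2

/-!
The quotient `F1 δ s / s ^ 2` is antitone on `(0, ∞)`: it equals `-log s` up to `δ` and
`1 / 2 - log δ - (2 - δ / s) ^ 2 / 2` from `δ` on, where `2 - δ / s` is at least `1` and increasing.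
For an even function vanishing at `0`, this monotonicity is the scaling bound
`F1 δ (c * t) ≤ c ^ 2 * F1 δ t` for `1 ≤ |c|`, and the `Δ₂`-condition is the case `c = 2`.
-/

open Set

theorem apply_mul_le_pow_mul_of_antitoneOn_div_pow {K : Type*} [Field K] [LinearOrder K]
    [IsStrictOrderedRing K] {f : K → K} {n : ℕ}
    (hf : AntitoneOn (fun s ↦ f s / s ^ n) (Ioi 0)) {c t : K} (hc : 1 ≤ c) (ht : 0 < t) :
    f (c * t) ≤ c ^ n * f t := by
  have hct : 0 < c * t := mul_pos (zero_lt_one.trans_le hc) ht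
  have hquot : f (c * t) / (c * t) ^ n ≤ f t / t ^ n :=
    hf ht hct (le_mul_of_one_le_left ht.le hc)
  calc
    f (c * t) ≤ f t / t ^ n * (c * t) ^ n := (div_le_iff₀ (pow_pos hct n)).mp hquot
    _ = c ^ n * f t := by rw [mul_pow]; field_simp

section F1

variable {δ s : ℝ}

theorem F1_abs (δ s : ℝ) : F1 δ |s| = F1 δ s := by
  simp only [F1, abs_abs, sq_abs]

theorem F1_of_abs_le (hs : |s| ≤ δ) : F1 δ s = -(1 / 2) * s ^ 2 * Real.log (s ^ 2) := by
  rcases hs.lt_or_eq with hlt | rfl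
  · exact if_pos hlt
  · rw [F1, if_neg (lt_irrefl _), sq_abs]
    linear_combination 2 * sq_abs s

theorem F1_zero (hδ : 0 ≤ δ) : F1 δ 0 = 0 := by
  simp [F1_of_abs_le (abs_zero.trans_le hδ)]

theorem F1_of_le_abs (hs : δ ≤ |s|) :
    F1 δ s = -(1 / 2) * s ^ 2 * (Real.log (δ ^ 2) + 3) + 2 * δ * |s| - (1 / 2) * δ ^ 2 :=
  if_neg hs.not_gt

theorem F1_div_sq_of_le (hs : 0 < s) (hsδ : s ≤ δ) : F1 δ s / s ^ 2 = -Real.log s := by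
  rw [F1_of_abs_le ((abs_of_pos hs).trans_le hsδ), Real.log_pow]
  field_simp
  norm_num

theorem F1_div_sq_of_ge (hs : 0 < s) (hδs : δ ≤ s) :
    F1 δ s / s ^ 2 = 1 / 2 - Real.log δ - (2 - δ / s) ^ 2 / 2 := by
  rw [F1_of_le_abs (hδs.trans (le_abs_self s)), abs_of_pos hs, Real.log_pow]
  field_simp
  push_cast
  ring

theorem antitoneOn_F1_div_sq_Ioc (δ : ℝ) : AntitoneOn (fun s ↦ F1 δ s / s ^ 2) (Ioc 0 δ) := by
  intro s ⟨hs, hsδ⟩ u ⟨hu, huδ⟩ hsu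
  simp only [F1_div_sq_of_le hs hsδ, F1_div_sq_of_le hu huδ]
  exact neg_le_neg (Real.log_le_log hs hsu)

theorem antitoneOn_F1_div_sq_Ici (hδ : 0 < δ) :
    AntitoneOn (fun s ↦ F1 δ s / s ^ 2) (Ici δ) := by
  intro s hδs u hδu hsu
  have hs : 0 < s := hδ.trans_le hδs
  have hdiv : δ / u ≤ δ / s := div_le_div_of_nonneg_left hδ.le hs hsu
  have hle_one : δ / s ≤ 1 := (div_le_one hs).mpr hδs
  have hsq : (2 - δ / s) ^ 2 ≤ (2 - δ / u) ^ 2 := pow_le_pow_left₀ (by linarith) (by linarith) 2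
  simp only [F1_div_sq_of_ge hs hδs, F1_div_sq_of_ge (hs.trans_le hsu) hδu]
  linarith

theorem antitoneOn_F1_div_sq (hδ : 0 < δ) : AntitoneOn (fun s ↦ F1 δ s / s ^ 2) (Ioi 0) := by
  rw [← Ioc_union_Ici_eq_Ioi hδ]
  exact (antitoneOn_F1_div_sq_Ioc δ).union_right (antitoneOn_F1_div_sq_Ici hδ)
    (isGreatest_Ioc hδ) isLeast_Ici

end F1

theorem stmt6_general {δ c : ℝ} (hδ : 0 < δ) (hc : 1 ≤ |c|) (t : ℝ) :
    F1 δ (c * t) ≤ c ^ 2 * F1 δ t := by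
  rcases eq_or_ne t 0 with rfl | ht
  · simp only [mul_zero, F1_zero hδ.le, le_refl]
  · rw [← F1_abs δ (c * t), ← F1_abs δ t, abs_mul, ← sq_abs c]
    exact apply_mul_le_pow_mul_of_antitoneOn_div_pow (antitoneOn_F1_div_sq hδ) hc (abs_pos.mpr ht)

theorem stmt6 (δ : ℝ) (hδ : 0 < δ) (hδ' : δ < Real.exp (-(3/2))) (t : ℝ) :
    F1 δ (2*t) ≤ 4 * F1 δ t := by
  convert stmt6_general (c := 2) hδ (by norm_num) t using 2
  norm_num
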